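/- Let a ∈ C⁰(S²) satisfy a(x) > 0 for every x ∈ S². Let f ∈ C⁰(S²) be a continuous, nonnegative, even function (f(−x) = f(x) for all x) which satisfies f(x) = a(x)·(fσ*fσ*fσ)(x) for every x ∈ S² and which does not vanish identically. Then f(x) > 0 for every x ∈ S². -/

import Mathlib

open MeasureTheory Metric Filter
open scoped ENNReal RealInnerProductSpace

noncomputable section

/-- `ℝ³`, i.e. three-dimensional Euclidean space. -/
abbrev E3 : Type := EuclideanSpace ℝ (Fin 3)

/-- The unit sphere `S² ⊂ ℝ³`. -/
def sph : Set E3 := Metric.sphere 0 1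

/-- Surface measure `σ` on the unit sphere `S²`, realized as the two-dimensional
Hausdorff measure on `ℝ³` restricted to the sphere. -/
def sphMeasure : Measure E3 := (μH[2]).restrict sph

/-- `Q` is (a representative of) the density, with respect to Lebesgue measure on `ℝ³`,
of the convolution `fσ * gσ` of the two finite measures `f dσ` and `g dσ`:
`Q ∈ L¹(ℝ³)` and `∫ φ Q = ∬ φ(x+y) f(x) g(y) dσ dσ` for all test functions `φ`. -/
def IsConvPairDensity (f g Q : E3 → ℂ) : Prop :=
  Integrable Q volume ∧
  ∀ φ : E3 → ℂ, Continuous φ → HasCompactSupport φ →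
    ∫ z, φ z * Q z = ∫ x, ∫ y, φ (x + y) * (f x * g y) ∂sphMeasure ∂sphMeasure

open Topology

/-- Height of the upper unit hemisphere above the point `a` of the plane. -/
def height (a : ℝ × ℝ) : ℝ := √(1 - a.1 ^ 2 - a.2 ^ 2)

/-- The hemisphere around `b 2`, as a graph over the plane spanned by `b 0` and `b 1`. -/
def chart (b : OrthonormalBasis (Fin 3) ℝ E3) (a : ℝ × ℝ) : E3 :=
  a.1 • b 0 + a.2 • b 1 + height a • b 2

/-- The part of the open unit disc where `height` exceeds `η`. -/
def chartDomain (η : ℝ) : Set (ℝ × ℝ) := {a | η ^ 2 < 1 - a.1 ^ 2 - a.2 ^ 2}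

/-- Orthogonal projection to the plane spanned by `b 0` and `b 1`, in coordinates. -/
def shadow (b : OrthonormalBasis (Fin 3) ℝ E3) (x : E3) : ℝ × ℝ := (⟪b 0, x⟫, ⟪b 1, x⟫)

lemma continuous_height : Continuous height := by
  unfold height; fun_prop

lemma continuous_chart (b : OrthonormalBasis (Fin 3) ℝ E3) : Continuous (chart b) := by
  have := continuous_height
  unfold chart; fun_prop

lemma isOpen_chartDomain (η : ℝ) : IsOpen (chartDomain η) :=
  isOpen_lt (by fun_prop) (by fun_prop)

lemma height_sq {η : ℝ} {a : ℝ × ℝ} (ha : a ∈ chartDomain η) :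
    height a ^ 2 = 1 - a.1 ^ 2 - a.2 ^ 2 :=
  Real.sq_sqrt ((sq_nonneg η).trans (le_of_lt ha))

lemma lt_height {η : ℝ} {a : ℝ × ℝ} (ha : a ∈ chartDomain η) :
    η < height a :=
  Real.lt_sqrt_of_sq_lt ha

lemma height_le_one (a : ℝ × ℝ) : height a ≤ 1 := by
  unfold height
  rw [Real.sqrt_le_one]
  nlinarith [sq_nonneg a.1, sq_nonneg a.2]

lemma abs_fst_le_one {η : ℝ} {a : ℝ × ℝ} (ha : a ∈ chartDomain η) : |a.1| ≤ 1 := by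
  have h : η ^ 2 < 1 - a.1 ^ 2 - a.2 ^ 2 := ha
  rw [← sq_le_one_iff_abs_le_one]
  nlinarith [sq_nonneg a.2, sq_nonneg η]

lemma abs_snd_le_one {η : ℝ} {a : ℝ × ℝ} (ha : a ∈ chartDomain η) : |a.2| ≤ 1 := by
  have h : η ^ 2 < 1 - a.1 ^ 2 - a.2 ^ 2 := ha
  rw [← sq_le_one_iff_abs_le_one]
  nlinarith [sq_nonneg a.1, sq_nonneg η]

lemma height_sub_mul_add {η : ℝ} {a c : ℝ × ℝ} (ha : a ∈ chartDomain η)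
    (hc : c ∈ chartDomain η) :
    (height a - height c) * (height a + height c) =
      (c.1 - a.1) * (c.1 + a.1) + (c.2 - a.2) * (c.2 + a.2) := by
  linear_combination height_sq ha - height_sq hc

lemma abs_height_sub_le {η : ℝ} (hη : 0 < η) {a c : ℝ × ℝ} (ha : a ∈ chartDomain η)
    (hc : c ∈ chartDomain η) :
    |height a - height c| ≤ (|a.1 - c.1| + |a.2 - c.2|) / η := by
  have h := height_sub_mul_add ha hc
  have hsum : 2 * η ≤ height a + height c := by linarith [lt_height ha, lt_height hc]
  rw [le_div_iff₀ hη]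
  have h1 : |c.1 + a.1| ≤ 2 := by
    linarith [abs_add_le c.1 a.1, abs_fst_le_one ha, abs_fst_le_one hc]
  have h2 : |c.2 + a.2| ≤ 2 := by
    linarith [abs_add_le c.2 a.2, abs_snd_le_one ha, abs_snd_le_one hc]
  have h3 : |height a - height c| * (height a + height c) ≤
      |a.1 - c.1| * 2 + |a.2 - c.2| * 2 := by
    rw [← abs_of_nonneg (by linarith : 0 ≤ height a + height c), ← abs_mul, h]
    refine (abs_add_le _ _).trans ?_
    rw [abs_mul, abs_mul, abs_sub_comm c.1, abs_sub_comm c.2]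
    gcongr
  nlinarith [abs_nonneg (height a - height c)]

lemma lipschitzOnWith_chart (b : OrthonormalBasis (Fin 3) ℝ E3) {η : ℝ} (hη : 0 < η) :
    LipschitzOnWith (Real.toNNReal (2 + 2 / η)) (chart b) (chartDomain η) := by
  refine LipschitzOnWith.of_dist_le_mul fun a ha c hc => ?_
  rw [Real.coe_toNNReal _ (by positivity), dist_eq_norm]
  have h1 : |a.1 - c.1| ≤ dist a c := by
    rw [← Real.dist_eq]; exact le_max_left _ _
  have h2 : |a.2 - c.2| ≤ dist a c := by
    rw [← Real.dist_eq]; exact le_max_right _ _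
  have h3 : |height a - height c| ≤ 2 * dist a c / η :=
    (abs_height_sub_le hη ha hc).trans (by gcongr; linarith)
  have h4 : chart b a - chart b c =
      (a.1 - c.1) • b 0 + (a.2 - c.2) • b 1 + (height a - height c) • b 2 := by
    unfold chart; module
  rw [h4]
  refine (norm_add₃_le ..).trans ?_
  simp only [norm_smul, b.norm_eq_one, mul_one, Real.norm_eq_abs]
  calc _ ≤ dist a c + dist a c + 2 * dist a c / η := by gcongr
    _ = _ := by ring

lemma inner_chart_zero (b : OrthonormalBasis (Fin 3) ℝ E3) (a : ℝ × ℝ) :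
    ⟪b 0, chart b a⟫ = a.1 := by
  simp [chart, inner_add_right, inner_smul_right]

lemma inner_chart_one (b : OrthonormalBasis (Fin 3) ℝ E3) (a : ℝ × ℝ) :
    ⟪b 1, chart b a⟫ = a.2 := by
  simp [chart, inner_add_right, inner_smul_right]

lemma inner_chart_two (b : OrthonormalBasis (Fin 3) ℝ E3) (a : ℝ × ℝ) :
    ⟪b 2, chart b a⟫ = height a := by
  simp [chart, inner_add_right, inner_smul_right]

lemma shadow_chart (b : OrthonormalBasis (Fin 3) ℝ E3) (a : ℝ × ℝ) :
    shadow b (chart b a) = a := by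
  simp [shadow, inner_chart_zero, inner_chart_one]

lemma norm_sq_eq_sum_inner (b : OrthonormalBasis (Fin 3) ℝ E3) (x : E3) :
    ‖x‖ ^ 2 = ⟪b 0, x⟫ ^ 2 + ⟪b 1, x⟫ ^ 2 + ⟪b 2, x⟫ ^ 2 := by
  rw [← b.sum_sq_norm_inner_right x, Fin.sum_univ_three]
  simp

lemma eq_sum_inner (b : OrthonormalBasis (Fin 3) ℝ E3) (x : E3) :
    x = ⟪b 0, x⟫ • b 0 + ⟪b 1, x⟫ • b 1 + ⟪b 2, x⟫ • b 2 := by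
  conv_lhs => rw [← b.sum_repr' x, Fin.sum_univ_three]

lemma mem_sph {x : E3} : x ∈ sph ↔ ‖x‖ = 1 := by simp [sph]

lemma chart_mem_sph (b : OrthonormalBasis (Fin 3) ℝ E3) {η : ℝ} {a : ℝ × ℝ}
    (ha : a ∈ chartDomain η) : chart b a ∈ sph := by
  rw [mem_sph, ← sq_eq_sq₀ (norm_nonneg _) zero_le_one, norm_sq_eq_sum_inner b,
    inner_chart_zero, inner_chart_one, inner_chart_two, height_sq ha]
  ring

lemma shadow_mem_chartDomain (b : OrthonormalBasis (Fin 3) ℝ E3) {η : ℝ} (hη : 0 < η) {x : E3}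
    (hx : x ∈ sph) (hxη : η < ⟪b 2, x⟫) : shadow b x ∈ chartDomain η := by
  have h := norm_sq_eq_sum_inner b x
  rw [mem_sph.1 hx] at h
  change η ^ 2 < 1 - ⟪b 0, x⟫ ^ 2 - ⟪b 1, x⟫ ^ 2
  nlinarith

lemma chart_shadow (b : OrthonormalBasis (Fin 3) ℝ E3) {x : E3}
    (hx : x ∈ sph) (hx0 : 0 ≤ ⟪b 2, x⟫) : chart b (shadow b x) = x := by
  have h := norm_sq_eq_sum_inner b x
  rw [mem_sph.1 hx] at h
  have h2 : height (shadow b x) = ⟪b 2, x⟫ := by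
    rw [height, ← Real.sqrt_sq hx0]
    congr 1
    simp only [shadow]
    linarith
  conv_rhs => rw [eq_sum_inner b x]
  rw [chart, h2]
  rfl

lemma lipschitzWith_shadow (b : OrthonormalBasis (Fin 3) ℝ E3) : LipschitzWith 1 (shadow b) := by
  refine LipschitzWith.of_dist_le_mul fun x y => ?_
  rw [NNReal.coe_one, one_mul]
  have h (i : Fin 3) : dist ⟪b i, x⟫ ⟪b i, y⟫ ≤ dist x y := by
    rw [Real.dist_eq, ← inner_sub_right, dist_eq_norm]
    simpa using abs_real_inner_le_norm (b i) (x - y)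
  exact max_le (h 0) (h 1)

lemma isClosed_sph : IsClosed sph := Metric.isClosed_sphere

/-- Lebesgue measure on the chart domain, transported to the sphere. -/
def chartMeasure (b : OrthonormalBasis (Fin 3) ℝ E3) (η : ℝ) : Measure E3 :=
  (volume.restrict (chartDomain η)).map (chart b)

lemma chartMeasure_le (b : OrthonormalBasis (Fin 3) ℝ E3) (η : ℝ) :
    chartMeasure b η ≤ sphMeasure := by
  refine Measure.le_iff.2 fun s hs => ?_
  have hm : MeasurableSet (chart b ⁻¹' s) := (continuous_chart b).measurable hs
  rw [chartMeasure, Measure.map_apply (continuous_chart b).measurable hs,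
    Measure.restrict_apply hm, sphMeasure, Measure.restrict_apply hs, ← hausdorffMeasure_prod_real]
  have h : chart b ⁻¹' s ∩ chartDomain η ⊆ shadow b '' (s ∩ sph) := fun a ha =>
    ⟨chart b a, ⟨ha.1, chart_mem_sph b ha.2⟩, shadow_chart b a⟩
  refine (measure_mono h).trans ?_
  simpa using (lipschitzWith_shadow b).hausdorffMeasure_image_le (d := 2) (by norm_num) (s ∩ sph)

/-- The open spherical cap of points of the sphere with third coordinate above `η`. -/
def cap (b : OrthonormalBasis (Fin 3) ℝ E3) (η : ℝ) : Set E3 := {x | η < ⟪b 2, x⟫}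

lemma isOpen_cap (b : OrthonormalBasis (Fin 3) ℝ E3) (η : ℝ) : IsOpen (cap b η) :=
  isOpen_lt (by fun_prop) (by fun_prop)

lemma restrict_cap_le (b : OrthonormalBasis (Fin 3) ℝ E3) {η : ℝ} (hη : 0 < η) :
    ∃ C : ℝ≥0∞, C ≠ ∞ ∧ sphMeasure.restrict (cap b η) ≤ C • chartMeasure b η := by
  refine ⟨(Real.toNNReal (2 + 2 / η) : ℝ≥0∞) ^ (2 : ℝ), by simp, Measure.le_iff.2 fun s hs => ?_⟩
  have hm : MeasurableSet (chart b ⁻¹' s) := (continuous_chart b).measurable hs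
  rw [Measure.restrict_apply hs, sphMeasure, Measure.restrict_apply
    (hs.inter (isOpen_cap b η).measurableSet), Measure.smul_apply, chartMeasure,
    Measure.map_apply (continuous_chart b).measurable hs,
    Measure.restrict_apply hm, ← hausdorffMeasure_prod_real, smul_eq_mul]
  have h : s ∩ cap b η ∩ sph ⊆ chart b '' (chart b ⁻¹' s ∩ chartDomain η) := by
    rintro x ⟨⟨hxs, hxc⟩, hx⟩
    have hc := chart_shadow b hx (hη.le.trans (le_of_lt hxc))
    exact ⟨shadow b x, ⟨by rwa [Set.mem_preimage, hc], shadow_mem_chartDomain b hη hx hxc⟩, hc⟩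
  exact (measure_mono h).trans (((lipschitzOnWith_chart b hη).mono
    Set.inter_subset_right).hausdorffMeasure_image_le (by norm_num))

lemma volume_chartDomain_lt_top (η : ℝ) : volume (chartDomain η) < ∞ := by
  refine (Bornology.IsBounded.subset (Metric.isBounded_closedBall (x := (0 : ℝ × ℝ)) (r := 1))
    fun a ha => ?_).measure_lt_top
  rw [mem_closedBall_zero_iff]
  exact max_le (abs_fst_le_one ha) (abs_snd_le_one ha)

lemma exists_basis_two_eq {x : E3} (hx : x ∈ sph) :
    ∃ b : OrthonormalBasis (Fin 3) ℝ E3, b 2 = x := by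
  obtain ⟨b, hb⟩ := Orthonormal.exists_orthonormalBasis_extension_of_card_eq
    (𝕜 := ℝ) (E := E3) (ι := Fin 3) (by simp) (v := fun _ => x) (s := {2}) (by
      rw [orthonormal_iff_ite]
      rintro ⟨i, hi⟩ ⟨j, hj⟩
      simp only [Set.mem_singleton_iff] at hi hj
      subst hi hj
      simp [mem_sph.1 hx])
  exact ⟨b, hb 2 rfl⟩

instance isFiniteMeasure_chartMeasure (b : OrthonormalBasis (Fin 3) ℝ E3) (η : ℝ) :
    IsFiniteMeasure (chartMeasure b η) := by
  have : IsFiniteMeasure (volume.restrict (chartDomain η)) :=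
    isFiniteMeasure_restrict.2 (volume_chartDomain_lt_top η).ne
  unfold chartMeasure
  infer_instance

instance isFiniteMeasure_sphMeasure : IsFiniteMeasure sphMeasure := by
  have h : sphMeasure sph < ∞ := by
    refine (isCompact_sphere (0 : E3) 1).measure_lt_top_of_nhdsWithin fun x hx => ?_
    obtain ⟨b, rfl⟩ := exists_basis_two_eq hx
    have hη : (0 : ℝ) < 1 / 2 := by norm_num
    obtain ⟨C, hC, hle⟩ := restrict_cap_le b hη
    refine ⟨cap b (1 / 2), mem_nhdsWithin_of_mem_nhds ((isOpen_cap b _).mem_nhds ?_), ?_⟩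
    · change (1 / 2 : ℝ) < ⟪b 2, b 2⟫
      simp; norm_num
    · have := hle Set.univ
      rw [Measure.restrict_apply_univ] at this
      refine this.trans_lt ?_
      simpa using ENNReal.mul_lt_top hC.lt_top (measure_lt_top (chartMeasure b (1 / 2)) Set.univ)
  refine ⟨?_⟩
  rw [sphMeasure, Measure.restrict_apply_univ]
  rwa [sphMeasure, Measure.restrict_apply_self] at h

lemma sphMeasure_pos_of_isOpen {O : Set E3} (hO : IsOpen O) {x : E3} (hx : x ∈ sph)
    (hxO : x ∈ O) : 0 < sphMeasure O := by
  obtain ⟨b, rfl⟩ := exists_basis_two_eq hx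
  refine lt_of_lt_of_le ?_ (chartMeasure_le b 0 O)
  rw [chartMeasure, Measure.map_apply (continuous_chart b).measurable hO.measurableSet,
    Measure.restrict_apply ((continuous_chart b).measurable hO.measurableSet)]
  refine (((hO.preimage (continuous_chart b)).inter (isOpen_chartDomain 0))).measure_pos _
    ⟨0, ?_, ?_⟩
  · simpa [chart, height] using hxO
  · simp [chartDomain]

lemma measurable_sph : MeasurableSet sph := isClosed_sph.measurableSet

lemma ae_mem_sph : ∀ᵐ x ∂sphMeasure, x ∈ sph := ae_restrict_mem measurable_sph

lemma sphMeasure_singleton (x : E3) : sphMeasure {x} = 0 := by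
  have := Measure.nullSingletonClass_hausdorff E3 (d := 2) (by norm_num)
  exact le_antisymm ((Measure.restrict_apply_le _ _).trans (measure_singleton x).le) bot_le

lemma map_neg_sphMeasure : sphMeasure.map (fun x => -x) = sphMeasure := by
  have h2 := ((IsometryEquiv.neg E3).measurePreserving_hausdorffMeasure 2).restrict_preimage
    measurable_sph
  have h3 : (IsometryEquiv.neg E3) ⁻¹' sph = sph := by
    ext x; simp [sph]
  rw [h3] at h2
  exact h2.map_eq

lemma volume_preimage_eq_zero_of_expanding {h : ℝ → ℝ} {I N : Set ℝ} {k : ℝ} (hk : 0 < k)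
    (hI : ∀ s ∈ I, ∀ t ∈ I, s ≤ t → h t + k * (t - s) ≤ h s) (hN : volume N = 0) :
    volume (I ∩ h ⁻¹' N) = 0 := by
  have hexp : ∀ s ∈ I, ∀ t ∈ I, k * |s - t| ≤ |h s - h t| := by
    intro s hs t ht
    rcases le_total s t with hst | hst
    · rw [abs_sub_comm, abs_of_nonneg (sub_nonneg.2 hst)]
      exact le_trans (by linarith [hI s hs t ht hst]) (le_abs_self _)
    · rw [abs_of_nonneg (sub_nonneg.2 hst), abs_sub_comm]
      exact le_trans (by linarith [hI t ht s hs hst]) (le_abs_self _)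
  have hinj : Set.InjOn h I := by
    intro s hs t ht hst
    have := hexp s hs t ht
    rw [hst, sub_self, abs_zero] at this
    have h0 : |s - t| ≤ 0 := by
      by_contra! hpos
      exact absurd this (not_le.2 (mul_pos hk hpos))
    exact sub_eq_zero.1 (abs_nonpos_iff.1 h0)
  set g := Function.invFunOn h I
  have hg : ∀ s ∈ I, g (h s) = s := fun s hs => hinj.leftInvOn_invFunOn hs
  have hlip : LipschitzOnWith (Real.toNNReal k⁻¹) g (h '' I ∩ N) := by
    refine LipschitzOnWith.of_dist_le_mul ?_
    rintro _ ⟨⟨s, hs, rfl⟩, -⟩ _ ⟨⟨t, ht, rfl⟩, -⟩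
    rw [hg s hs, hg t ht, Real.coe_toNNReal _ (by positivity), Real.dist_eq, Real.dist_eq,
      inv_mul_eq_div, le_div_iff₀' hk]
    exact hexp s hs t ht
  have hsub : I ∩ h ⁻¹' N ⊆ g '' (h '' I ∩ N) := fun s hs =>
    ⟨h s, ⟨⟨s, hs.1, rfl⟩, hs.2⟩, hg s hs.1⟩
  have := hlip.hausdorffMeasure_image_le (d := 1) zero_le_one
  rw [hausdorffMeasure_real, measure_mono_null Set.inter_subset_right hN, mul_zero] at this
  exact measure_mono_null hsub (le_antisymm this bot_le)

lemma volume_inter_le_of_lipschitzOnWith {h : ℝ → ℝ} {I J N : Set ℝ} {K : NNReal}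
    (hI : LipschitzOnWith K h I) (hJ : J ⊆ h '' I) :
    volume (N ∩ J) ≤ K * volume (I ∩ h ⁻¹' N) := by
  have hsub : N ∩ J ⊆ h '' (I ∩ h ⁻¹' N) := by
    rintro _ ⟨hN, hJ'⟩
    obtain ⟨s, hs, rfl⟩ := hJ hJ'
    exact ⟨s, ⟨hs, hN⟩, rfl⟩
  have := (hI.mono (Set.inter_subset_left (t := h ⁻¹' N))).hausdorffMeasure_image_le
    (d := 1) zero_le_one
  rw [hausdorffMeasure_real, ENNReal.rpow_one] at this
  exact (measure_mono hsub).trans this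

/-- Third coordinate of the sum of two points of a hemisphere whose projections to the
plane are `a` and `c - a`. -/
def sumHeight (c a : ℝ × ℝ) : ℝ := height a + height (c - a)

lemma continuous_sumHeight : Continuous fun p : (ℝ × ℝ) × (ℝ × ℝ) => sumHeight p.1 p.2 := by
  have := continuous_height
  unfold sumHeight; fun_prop

lemma height_add_le_height {η κ t s s' : ℝ} (hη : 0 < η) (hκ : 0 ≤ κ)
    (h : (t, s) ∈ chartDomain η) (h' : (t, s') ∈ chartDomain η) (hs : κ ≤ s) (hss' : s ≤ s') :
    height (t, s') + κ * (s' - s) ≤ height (t, s) := by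
  have h1 := height_sub_mul_add h h'
  have h2 := lt_height h
  have h3 := lt_height h'
  have h4 := height_le_one (t, s)
  have h5 := height_le_one (t, s')
  simp only [sub_self, zero_mul, zero_add] at h1
  have h6 : 2 * κ * (s' - s) ≤ (s' - s) * (s' + s) := by nlinarith
  have h7 : 0 ≤ height (t, s) - height (t, s') := by
    by_contra! hneg
    nlinarith [mul_nonneg hκ (sub_nonneg.2 hss')]
  nlinarith

lemma height_neg (a : ℝ × ℝ) : height (-a) = height a := by simp [height]

lemma neg_mem_chartDomain {η : ℝ} {a : ℝ × ℝ} (ha : a ∈ chartDomain η) : -a ∈ chartDomain η := by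
  simpa [chartDomain] using ha

lemma sumHeight_add_le {η κ t s s' : ℝ} {c : ℝ × ℝ} (hη : 0 < η) (hκ : 0 ≤ κ)
    (h : (t, s) ∈ chartDomain η) (h' : (t, s') ∈ chartDomain η)
    (hc : c - (t, s) ∈ chartDomain η) (hc' : c - (t, s') ∈ chartDomain η)
    (hs : κ ≤ s) (hcs : c.2 - s ≤ -κ) (hss' : s ≤ s') :
    sumHeight c (t, s') + 2 * κ * (s' - s) ≤ sumHeight c (t, s) := by
  have e (r : ℝ) : -(c - (t, r)) = (t - c.1, r - c.2) := by ext <;> simp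
  have h1 := height_add_le_height hη hκ h h' hs hss'
  have h2 := height_add_le_height hη hκ (e s ▸ neg_mem_chartDomain hc)
    (e s' ▸ neg_mem_chartDomain hc') (by linarith) (by linarith)
  rw [← e, ← e, height_neg, height_neg] at h2
  unfold sumHeight
  linarith

lemma abs_sumHeight_sub_le {η t s s' : ℝ} {c : ℝ × ℝ} (hη : 0 < η)
    (h : (t, s) ∈ chartDomain η) (h' : (t, s') ∈ chartDomain η)
    (hc : c - (t, s) ∈ chartDomain η) (hc' : c - (t, s') ∈ chartDomain η) :
    |sumHeight c (t, s) - sumHeight c (t, s')| ≤ 2 / η * |s - s'| := by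
  have h1 := abs_height_sub_le hη h h'
  have h2 := abs_height_sub_le hη hc hc'
  simp only [sub_self, abs_zero, zero_add, Prod.fst_sub, Prod.snd_sub] at h1 h2
  rw [show c.2 - s - (c.2 - s') = -(s - s') by ring, abs_neg] at h2
  unfold sumHeight
  calc _ = |(height (t, s) - height (t, s')) + (height (c - (t, s)) - height (c - (t, s')))| := by
        congr 1; ring
    _ ≤ |s - s'| / η + |s - s'| / η := (abs_add_le _ _).trans (add_le_add h1 h2)
    _ = _ := by ring

/-- Coordinates of `ℝ³` in an orthonormal basis, split as a plane and a line. -/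
def assemble (b : OrthonormalBasis (Fin 3) ℝ E3) : ((ℝ × ℝ) × ℝ) ≃L[ℝ] E3 :=
  LinearEquiv.toContinuousLinearEquiv
    { toFun := fun p => p.1.1 • b 0 + p.1.2 • b 1 + p.2 • b 2
      map_add' := fun p q => by simp only [Prod.fst_add, Prod.snd_add]; module
      map_smul' := fun r p => by
        simp only [Prod.smul_fst, Prod.smul_snd, smul_eq_mul, RingHom.id_apply]; module
      invFun := fun x => ((⟪b 0, x⟫, ⟪b 1, x⟫), ⟪b 2, x⟫)
      left_inv := fun p => by simp [inner_add_right, inner_smul_right]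
      right_inv := fun x => (eq_sum_inner b x).symm }

lemma assemble_apply (b : OrthonormalBasis (Fin 3) ℝ E3) (p : (ℝ × ℝ) × ℝ) :
    assemble b p = p.1.1 • b 0 + p.1.2 • b 1 + p.2 • b 2 := rfl

lemma chart_sub_add_chart (b : OrthonormalBasis (Fin 3) ℝ E3) (c a : ℝ × ℝ) :
    chart b (c - a) + chart b a = assemble b (c, sumHeight c a) := by
  simp only [assemble_apply, chart, sumHeight, Prod.fst_sub, Prod.snd_sub]
  module

lemma exists_map_assemble (b : OrthonormalBasis (Fin 3) ℝ E3) :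
    ∃ k : ℝ≥0∞, k ≠ 0 ∧ k ≠ ∞ ∧
      ∀ N : Set E3, MeasurableSet N → volume (assemble b ⁻¹' N) = k * volume N := by
  have : (volume : Measure (ℝ × ℝ)).IsAddHaarMeasure := by
    rw [Measure.volume_eq_prod]; infer_instance
  have : (volume : Measure ((ℝ × ℝ) × ℝ)).IsAddHaarMeasure := by
    rw [Measure.volume_eq_prod]; infer_instance
  have : ((volume : Measure ((ℝ × ℝ) × ℝ)).map (assemble b)).IsAddHaarMeasure :=
    (assemble b).isAddHaarMeasure_map _
  refine ⟨Measure.addHaarScalarFactor (volume.map (assemble b)) (volume : Measure E3),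
    ?_, ENNReal.coe_ne_top, fun N hN => ?_⟩
  · exact_mod_cast (Measure.addHaarScalarFactor_pos_of_isAddHaarMeasure _ _).ne'
  · rw [← Measure.map_apply (assemble b).continuous.measurable hN]
    exact congrArg (fun μ : Measure E3 => μ N)
      (Measure.isAddLeftInvariant_eq_smul (volume.map (assemble b)) (volume : Measure E3))

/-- The pairs of points of the plane whose lifts to the hemisphere lie in `W` and add up to a
point of `N`, in the coordinates given by the sum and the second point. -/
def pairsOver (b : OrthonormalBasis (Fin 3) ℝ E3) (η : ℝ) (W : Set (E3 × E3)) (N : Set E3) :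
    Set ((ℝ × ℝ) × (ℝ × ℝ)) :=
  {p | p.2 ∈ chartDomain η ∧ p.1 - p.2 ∈ chartDomain η ∧
    (chart b (p.1 - p.2), chart b p.2) ∈ W ∧ assemble b (p.1, sumHeight p.1 p.2) ∈ N}

lemma measurableSet_pairsOver (b : OrthonormalBasis (Fin 3) ℝ E3) (η : ℝ) {W : Set (E3 × E3)}
    {N : Set E3} (hW : MeasurableSet W) (hN : MeasurableSet N) :
    MeasurableSet (pairsOver b η W N) := by
  have hc := continuous_chart b
  have hs := continuous_sumHeight
  have hD := (isOpen_chartDomain η).measurableSet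
  have m1 : Measurable fun p : (ℝ × ℝ) × (ℝ × ℝ) => (chart b (p.1 - p.2), chart b p.2) :=
    Continuous.measurable (by fun_prop)
  have m2 : Measurable fun p : (ℝ × ℝ) × (ℝ × ℝ) => assemble b (p.1, sumHeight p.1 p.2) :=
    Continuous.measurable (by fun_prop)
  exact (measurable_snd hD).inter (((measurable_fst.sub measurable_snd) hD).inter
    ((m1 hW).inter (m2 hN)))

lemma chartMeasure_prod_apply (b : OrthonormalBasis (Fin 3) ℝ E3) (η : ℝ) {W : Set (E3 × E3)}
    {N : Set E3} (hW : MeasurableSet W) (hN : MeasurableSet N) :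
    ((chartMeasure b η).prod (chartMeasure b η)) (W ∩ {p | p.1 + p.2 ∈ N}) =
      volume (pairsOver b η W N) := by
  have hc := (continuous_chart b).measurable
  have hE : MeasurableSet (W ∩ {p : E3 × E3 | p.1 + p.2 ∈ N}) :=
    hW.inter (measurable_add hN)
  rw [chartMeasure, Measure.map_prod_map _ _ hc hc, Measure.map_apply (hc.prodMap hc) hE,
    Measure.prod_restrict, Measure.restrict_apply ((hc.prodMap hc) hE)]
  have hT : MeasurePreserving (fun z : (ℝ × ℝ) × (ℝ × ℝ) => (z.1 + z.2, z.2))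
    volume volume := measurePreserving_add_prod volume volume
  rw [← hT.measure_preimage (measurableSet_pairsOver b η hW hN).nullMeasurableSet,
    ← Measure.volume_eq_prod]
  congr 1
  ext ⟨x, y⟩
  have := chart_sub_add_chart b (x + y) y
  simp only [add_sub_cancel_right] at this
  simp only [Set.mem_inter_iff, Set.mem_preimage, Prod.map_apply, Set.mem_ofPred_eq, pairsOver,
    Set.mem_prod, add_sub_cancel_right, this]
  tauto

/-- Pairs of points on opposite sides of the plane orthogonal to `b 1`. -/
def opposite (b : OrthonormalBasis (Fin 3) ℝ E3) (κ : ℝ) : Set (E3 × E3) :=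
  {p | ⟪b 1, p.1⟫ < -κ ∧ κ < ⟪b 1, p.2⟫}

lemma isOpen_opposite (b : OrthonormalBasis (Fin 3) ℝ E3) (κ : ℝ) : IsOpen (opposite b κ) := by
  have h1 : IsOpen {p : E3 × E3 | ⟪b 1, p.1⟫ < -κ} := isOpen_lt (by fun_prop) (by fun_prop)
  have h2 : IsOpen {p : E3 × E3 | κ < ⟪b 1, p.2⟫} := isOpen_lt (by fun_prop) (by fun_prop)
  exact h1.inter h2

lemma volume_pairsOver_opposite (b : OrthonormalBasis (Fin 3) ℝ E3) {η κ : ℝ} (hη : 0 < η)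
    (hκ : 0 < κ) {N : Set E3} (hN : MeasurableSet N) (hN0 : volume N = 0) :
    volume (pairsOver b η (opposite b κ) N) = 0 := by
  have hm := measurableSet_pairsOver b η (isOpen_opposite b κ).measurableSet hN
  obtain ⟨k, -, -, hk⟩ := exists_map_assemble b
  have hNa : volume (assemble b ⁻¹' N) = 0 := by rw [hk N hN, hN0, mul_zero]
  rw [Measure.volume_eq_prod,
    Measure.measure_prod_null ((assemble b).continuous.measurable hN)] at hNa
  rw [Measure.volume_eq_prod, Measure.measure_prod_null hm]
  filter_upwards [hNa] with c hc
  rw [Measure.volume_eq_prod, Pi.zero_apply,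
    Measure.measure_prod_null (measurable_prodMk_left hm)]
  refine Eventually.of_forall fun t => ?_
  have hnull := volume_preimage_eq_zero_of_expanding (h := fun s => sumHeight c (t, s))
    (I := {s | (t, s) ∈ chartDomain η ∧ c - (t, s) ∈ chartDomain η ∧ κ ≤ s ∧ c.2 - s ≤ -κ})
    (k := 2 * κ) (by positivity) ?_ hc
  · refine measure_mono_null ?_ hnull
    rintro s ⟨h1, h2, h3, h4⟩
    simp only [opposite, Set.mem_ofPred_eq, inner_chart_one, Prod.snd_sub] at h3
    exact ⟨⟨h1, h2, h3.2.le, h3.1.le⟩, h4⟩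
  · rintro s ⟨h1, h2, h3, h4⟩ s' ⟨h1', h2', h3', h4'⟩ hss'
    exact sumHeight_add_le hη hκ.le h1 h1' h2 h2' h3 h4 hss'

lemma sphMeasure_prod_opposite (b : OrthonormalBasis (Fin 3) ℝ E3) {η κ : ℝ} (hη : 0 < η)
    (hκ : 0 < κ) {N : Set E3} (hN : MeasurableSet N) (hN0 : volume N = 0) :
    (sphMeasure.prod sphMeasure)
      ((opposite b κ ∩ {p | p.1 + p.2 ∈ N}) ∩ cap b η ×ˢ cap b η) = 0 := by
  have hW := (isOpen_opposite b κ).measurableSet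
  obtain ⟨C, -, hC⟩ := restrict_cap_le b hη
  have hac := Measure.absolutelyContinuous_of_le_smul hC
  have h0 := volume_pairsOver_opposite b hη hκ hN hN0
  rw [← chartMeasure_prod_apply b η hW hN] at h0
  have h1 := (hac.prod hac) h0
  have hm : MeasurableSet {p : E3 × E3 | p.1 + p.2 ∈ N} := measurable_add hN
  rwa [Measure.prod_restrict, Measure.restrict_apply (hW.inter hm)] at h1

/-- Two linearly independent points of the sphere, put in symmetric position. -/
lemma exists_basis_symmetric {x y : E3} (hx : x ∈ sph) (hy : y ∈ sph) (hxy : x ≠ y)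
    (hxy' : x ≠ -y) :
    ∃ (b : OrthonormalBasis (Fin 3) ℝ E3) (α β : ℝ), 0 < α ∧ 0 < β ∧
      x = -α • b 1 + β • b 2 ∧ y = α • b 1 + β • b 2 := by
  have hm : y - x ≠ 0 := sub_ne_zero.2 hxy.symm
  have hp : x + y ≠ 0 := fun h => hxy' (eq_neg_of_add_eq_zero_left h)
  have horth : ⟪y - x, x + y⟫ = 0 := by
    simp only [inner_sub_left, inner_add_right, real_inner_self_eq_norm_sq, mem_sph.1 hx,
      mem_sph.1 hy, real_inner_comm]
    ring
  have horth' : ⟪x + y, y - x⟫ = 0 := by rw [real_inner_comm, horth]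
  obtain ⟨b, hb⟩ := Orthonormal.exists_orthonormalBasis_extension_of_card_eq
    (𝕜 := ℝ) (E := E3) (ι := Fin 3) (by simp)
    (v := ![0, ‖y - x‖⁻¹ • (y - x), ‖x + y‖⁻¹ • (x + y)]) (s := {1, 2}) (by
      constructor
      · rintro ⟨i, hi | hi⟩ <;> subst hi <;> simp [-smul_add, norm_smul, hm, hp]
      · rintro ⟨i, hi | hi⟩ ⟨j, hj | hj⟩ <;> subst hi <;> subst hj <;> intro hij <;>
          simp [-smul_add, inner_smul_left, inner_smul_right, horth, horth'] at hij ⊢)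
  have h1 : b 1 = ‖y - x‖⁻¹ • (y - x) := hb 1 (by simp)
  have h2 : b 2 = ‖x + y‖⁻¹ • (x + y) := hb 2 (by simp)
  have hm' : ‖y - x‖ ≠ 0 := norm_ne_zero_iff.2 hm
  have hp' : ‖x + y‖ ≠ 0 := norm_ne_zero_iff.2 hp
  refine ⟨b, ‖y - x‖ / 2, ‖x + y‖ / 2, by positivity, by positivity, ?_, ?_⟩
  · rw [h1, h2, smul_smul, smul_smul, show -(‖y - x‖ / 2) * ‖y - x‖⁻¹ = -(1 / 2) by field_simp,
      show ‖x + y‖ / 2 * ‖x + y‖⁻¹ = 1 / 2 by field_simp]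
    module
  · rw [h1, h2, smul_smul, smul_smul, show ‖y - x‖ / 2 * ‖y - x‖⁻¹ = 1 / 2 by field_simp,
      show ‖x + y‖ / 2 * ‖x + y‖⁻¹ = 1 / 2 by field_simp]
    module

/-- The push-forward of `σ × σ` under addition is absolutely continuous. -/
lemma sphMeasure_prod_add_mem_null {N : Set E3} (hN0 : volume N = 0) :
    (sphMeasure.prod sphMeasure) {p | p.1 + p.2 ∈ N} = 0 := by
  wlog hN : MeasurableSet N generalizing N
  · refine measure_mono_null ?_ (this (N := toMeasurable volume N)
      (by rwa [measure_toMeasurable]) (measurableSet_toMeasurable _ _))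
    exact fun p hp => subset_toMeasurable _ _ hp
  have hdiag : ∀ᵐ p ∂sphMeasure.prod sphMeasure, p.2 ≠ p.1 ∧ p.2 ≠ -p.1 := by
    have hms : MeasurableSet {p : E3 × E3 | p.2 ≠ p.1 ∧ p.2 ≠ -p.1} :=
      ((isOpen_ne_fun (by fun_prop) (by fun_prop)).inter
        (isOpen_ne_fun (by fun_prop) (by fun_prop))).measurableSet
    rw [Measure.ae_prod_iff_ae_ae hms]
    refine Eventually.of_forall fun x => ?_
    have (z : E3) : ∀ᵐ y ∂sphMeasure, y ≠ z := by
      rw [ae_iff]; simpa using sphMeasure_singleton z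
    filter_upwards [this x, this (-x)] with y h1 h2 using ⟨h1, h2⟩
  have hsph : ∀ᵐ p ∂sphMeasure.prod sphMeasure, p.1 ∈ sph ∧ p.2 ∈ sph := by
    have h1 := Measure.quasiMeasurePreserving_fst (μ := sphMeasure) (ν := sphMeasure)
    have h2 := Measure.quasiMeasurePreserving_snd (μ := sphMeasure) (ν := sphMeasure)
    filter_upwards [h1.ae ae_mem_sph, h2.ae ae_mem_sph] with p h1 h2 using ⟨h1, h2⟩
  have hloc : (sphMeasure.prod sphMeasure) {p : E3 × E3 | p.1 + p.2 ∈ N ∧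
      (p.2 ≠ p.1 ∧ p.2 ≠ -p.1) ∧ (p.1 ∈ sph ∧ p.2 ∈ sph)} = 0 := by
    refine measure_null_of_locally_null _ ?_
    rintro ⟨x, y⟩ ⟨-, ⟨h1, h2⟩, hx, hy⟩
    simp only at h1 h2 hx hy
    obtain ⟨b, α, β, hα, hβ, rfl, rfl⟩ := exists_basis_symmetric hx hy h1.symm
      (fun h => h2 (by rw [h, neg_neg]))
    have hα2 : 0 < α / 2 := by positivity
    have hβ2 : 0 < β / 2 := by positivity
    refine ⟨_, ?_, sphMeasure_prod_opposite b hβ2 hα2 hN hN0⟩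
    have hO := (isOpen_opposite b (α / 2)).inter ((isOpen_cap b (β / 2)).prod (isOpen_cap b (β / 2)))
    refine mem_of_superset (inter_mem_nhdsWithin _ (hO.mem_nhds ?_))
      (fun p hp => ⟨⟨hp.2.1, hp.1.1⟩, hp.2.2⟩)
    refine ⟨?_, ?_, ?_⟩
    · constructor <;> simp [inner_add_right, inner_smul_right] <;> linarith
    · simp [cap, inner_add_right, inner_smul_right]; linarith
    · simp [cap, inner_add_right, inner_smul_right]; linarith
  have : ∀ᵐ p ∂sphMeasure.prod sphMeasure, ¬ (p.1 + p.2 ∈ N) := by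
    have h3 : ∀ᵐ p ∂sphMeasure.prod sphMeasure, ¬ (p.1 + p.2 ∈ N ∧
      (p.2 ≠ p.1 ∧ p.2 ≠ -p.1) ∧ (p.1 ∈ sph ∧ p.2 ∈ sph)) := by
      rw [ae_iff]; simpa only [not_not] using hloc
    filter_upwards [hdiag, hsph, h3] with p h1 h2 h3 h4 using h3 ⟨h4, h1, h2⟩
  rw [ae_iff] at this
  simpa only [not_not] using this

lemma volume_inter_Ioo_le_sumHeight {η κ δ m t h₀ : ℝ} {c : ℝ × ℝ} (hη : 0 < η) (hκ : 0 < κ)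
    (hδ : 0 < δ) (hbox : ∀ s ∈ Set.Icc (m - δ) (m + δ), (t, s) ∈ chartDomain η ∧
      c - (t, s) ∈ chartDomain η ∧ κ ≤ s ∧ c.2 - s ≤ -κ)
    (hmid : |sumHeight c (t, m) - h₀| < κ * δ) (N : Set ℝ) :
    volume (N ∩ Set.Ioo (h₀ - κ * δ) (h₀ + κ * δ)) ≤ (Real.toNNReal (2 / η)) *
      volume (Set.Icc (m - δ) (m + δ) ∩ (fun s => sumHeight c (t, s)) ⁻¹' N) := by
  refine volume_inter_le_of_lipschitzOnWith ?_ ?_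
  · refine LipschitzOnWith.of_dist_le_mul fun s hs s' hs' => ?_
    obtain ⟨h1, h2, -⟩ := hbox s hs
    obtain ⟨h1', h2', -⟩ := hbox s' hs'
    rw [Real.dist_eq, Real.dist_eq, Real.coe_toNNReal _ (by positivity)]
    exact abs_sumHeight_sub_le hη h1 h1' h2 h2'
  · have hcont : ContinuousOn (fun s => sumHeight c (t, s)) (Set.Icc (m - δ) (m + δ)) := by
      have : Continuous fun s => sumHeight c (t, s) :=
        continuous_sumHeight.comp (by fun_prop : Continuous fun s : ℝ => (c, (t, s)))
      exact this.continuousOn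
    refine subset_trans ?_ (intermediate_value_Icc' (by linarith) hcont)
    obtain ⟨l1, l2, l3, l4⟩ := hbox (m - δ) ⟨le_rfl, by linarith⟩
    obtain ⟨m1, m2, m3, m4⟩ := hbox m ⟨by linarith, by linarith⟩
    obtain ⟨r1, r2, -⟩ := hbox (m + δ) ⟨by linarith, le_rfl⟩
    have hl := sumHeight_add_le hη hκ.le l1 m1 l2 m2 l3 l4 (by linarith)
    have hr := sumHeight_add_le hη hκ.le m1 r1 m2 r2 m3 m4 (by linarith)
    rw [abs_lt] at hmid
    rintro h ⟨hh1, hh2⟩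
    constructor <;> nlinarith

lemma mul_volume_le_volume_prod {α : Type*} [MeasureSpace α]
    {β : Type*} [MeasureSpace β] [SFinite (volume : Measure β)]
    {S : Set (α × β)} (hS : MeasurableSet S) {T : Set α} (hT : MeasurableSet T) {m : ℝ≥0∞}
    (h : ∀ t ∈ T, m ≤ volume (Prod.mk t ⁻¹' S)) :
    m * volume T ≤ volume S := by
  rw [Measure.volume_eq_prod, Measure.prod_apply hS]
  calc m * volume T = ∫⁻ _ in T, m := by simp
    _ ≤ ∫⁻ t in T, volume (Prod.mk t ⁻¹' S) := setLIntegral_mono' hT h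
    _ ≤ _ := setLIntegral_le_lintegral _ _

lemma smul_add_smul_mem_sph (b : OrthonormalBasis (Fin 3) ℝ E3) {i j : Fin 3} (hij : i ≠ j)
    {α β : ℝ} : α • b i + β • b j ∈ sph ↔ α ^ 2 + β ^ 2 = 1 := by
  have h : ‖α • b i + β • b j‖ ^ 2 = α ^ 2 + β ^ 2 := by
    rw [norm_add_sq_real, real_inner_smul_left, real_inner_smul_right, b.orthonormal.2 hij,
      norm_smul, norm_smul, b.norm_eq_one, b.norm_eq_one]
    simp
  rw [mem_sph, ← h, pow_eq_one_iff_of_nonneg (norm_nonneg _) two_ne_zero]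

/-- The convolution square of the surface measure is locally bounded below. -/
lemma exists_mul_volume_le_sphMeasure_prod {x y : E3} (hx : x ∈ sph) (hy : y ∈ sph) (hxy : x ≠ y)
    (hxy' : x ≠ -y) {V₁ V₂ : Set E3} (hV₁ : IsOpen V₁) (hV₂ : IsOpen V₂) (hxV : x ∈ V₁)
    (hyV : y ∈ V₂) :
    ∃ k : ℝ≥0∞, k ≠ 0 ∧ ∃ B : Set E3, IsOpen B ∧ x + y ∈ B ∧
      ∀ N ⊆ B, MeasurableSet N →
        k * volume N ≤ (sphMeasure.prod sphMeasure) (V₁ ×ˢ V₂ ∩ {p | p.1 + p.2 ∈ N}) := by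
  obtain ⟨b, α, β, hα, hβ, rfl, rfl⟩ := exists_basis_symmetric hx hy hxy hxy'
  have hαβ : α ^ 2 + β ^ 2 = 1 := (smul_add_smul_mem_sph b (by decide)).1 hy
  have hht : ∀ r : ℝ, r ^ 2 = α ^ 2 → height (0, r) = β := fun r hr => by
    rw [height, ← Real.sqrt_sq hβ.le]
    congr 1
    simp only; linarith
  have hsum0 : sumHeight 0 (0, α) = 2 * β := by
    have e : (0 : ℝ × ℝ) - (0, α) = (0, -α) := by simp
    rw [sumHeight, e, hht _ rfl, hht _ (by ring)]; ring
  have hη : 0 < β / 2 := by positivity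
  have hκ : 0 < α / 2 := by positivity
  set η := β / 2 with hηdef
  set κ := α / 2 with hκdef
  have hD := isOpen_chartDomain η
  have hc := continuous_chart b
  have hev : ∀ᶠ q : (ℝ × ℝ) × (ℝ × ℝ) in 𝓝 (0, (0, α)), q.2 ∈ chartDomain η ∧
      q.1 - q.2 ∈ chartDomain η ∧ chart b (q.1 - q.2) ∈ V₁ ∧ chart b q.2 ∈ V₂ ∧ κ < q.2.2 ∧
      q.1.2 - q.2.2 < -κ := by
    have e : (0 : ℝ × ℝ) - (0, α) = (0, -α) := by simp
    have hs : Continuous fun q : (ℝ × ℝ) × (ℝ × ℝ) => q.1 - q.2 := by fun_prop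
    have hdom : ∀ r : ℝ, r ^ 2 = α ^ 2 → ((0, r) : ℝ × ℝ) ∈ chartDomain η := fun r hr => by
      change η ^ 2 < 1 - (0 : ℝ) ^ 2 - r ^ 2
      nlinarith
    refine (continuous_snd.continuousAt.eventually (hD.mem_nhds (hdom α rfl))).and
      ((hs.continuousAt.eventually (hD.mem_nhds ?_)).and
      (((hc.comp hs).continuousAt.eventually (hV₁.mem_nhds ?_)).and
      (((hc.comp continuous_snd).continuousAt.eventually (hV₂.mem_nhds ?_)).and
      ((Continuous.continuousAt (by fun_prop)).eventually (lt_mem_nhds ?_) |>.and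
      ((Continuous.continuousAt (by fun_prop)).eventually (gt_mem_nhds ?_))))))
    · simp only [e]; exact hdom _ (by ring)
    · simpa [chart, hht (-α) (by ring)] using hxV
    · simpa [chart, hht α rfl] using hyV
    · simp only; linarith
    · simp only [Prod.snd_zero]; linarith
  obtain ⟨ε, hε, hbox⟩ := Metric.eventually_nhds_iff.1 hev
  set δ := ε / 2 with hδdef
  have hδ : 0 < δ := by positivity
  have hev2 : ∀ᶠ r : (ℝ × ℝ) × ℝ in 𝓝 0, |sumHeight r.1 (r.2, α) - 2 * β| < κ * δ := by
    have hcont : Continuous fun r : (ℝ × ℝ) × ℝ => |sumHeight r.1 (r.2, α) - 2 * β| := by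
      have : Continuous fun r : (ℝ × ℝ) × ℝ => sumHeight r.1 (r.2, α) :=
        continuous_sumHeight.comp (by fun_prop : Continuous fun r : (ℝ × ℝ) × ℝ => (r.1, (r.2, α)))
      fun_prop
    refine hcont.continuousAt.eventually (gt_mem_nhds ?_)
    simp only [Prod.fst_zero, Prod.snd_zero, hsum0, sub_self, abs_zero]
    positivity
  obtain ⟨ε', hε', hmid⟩ := Metric.eventually_nhds_iff.1 hev2
  obtain ⟨γ, hγ, hγε, hγε'⟩ : ∃ γ > 0, γ ≤ ε ∧ γ ≤ ε' :=
    ⟨min ε ε', lt_min hε hε', min_le_left _ _, min_le_right _ _⟩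
  obtain ⟨k, hk0, -, hk⟩ := exists_map_assemble b
  set K : ℝ≥0∞ := (Real.toNNReal (2 / η) : ℝ≥0∞) with hKdef
  have hK0 : K ≠ 0 := by
    have : 0 < 2 / η := by positivity
    simpa [hKdef] using this
  have hKtop : K ≠ ∞ := ENNReal.coe_ne_top
  refine ⟨K⁻¹ * volume (Set.Ioo (-γ) γ) * k, ?_,
    (assemble b).symm ⁻¹' (ball 0 γ ×ˢ Set.Ioo (2 * β - κ * δ) (2 * β + κ * δ)), ?_, ?_, ?_⟩
  · refine mul_ne_zero (mul_ne_zero (ENNReal.inv_ne_zero.2 hKtop) ?_) hk0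
    simp [hγ]
  · exact (isOpen_ball.prod isOpen_Ioo).preimage (assemble b).symm.continuous
  · have e : -α • b 1 + β • b 2 + (α • b 1 + β • b 2) = assemble b (0, 2 * β) := by
      simp only [assemble_apply, Prod.fst_zero, Prod.snd_zero]; module
    rw [e, Set.mem_preimage, ContinuousLinearEquiv.symm_apply_apply]
    have : 0 < κ * δ := by positivity
    exact ⟨mem_ball_self hγ, by constructor <;> simp only <;> linarith⟩
  · intro N hNB hN
    have hV : MeasurableSet (V₁ ×ˢ V₂) := (hV₁.prod hV₂).measurableSet
    have hm := measurableSet_pairsOver b η hV hN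
    refine le_trans ?_ (Measure.prod_mono (chartMeasure_le b η) (chartMeasure_le b η) _)
    rw [chartMeasure_prod_apply b η hV hN, mul_assoc, ← hk N hN]
    have hNa : MeasurableSet (assemble b ⁻¹' N) := (assemble b).continuous.measurable hN
    rw [Measure.volume_eq_prod, Measure.volume_eq_prod (ℝ × ℝ) (ℝ × ℝ), Measure.prod_apply hNa,
      Measure.prod_apply hm]
    refine (lintegral_const_mul_le _ _).trans (lintegral_mono fun c => ?_)
    have hsec : ∀ h, h ∈ Prod.mk c ⁻¹' (assemble b ⁻¹' N) →
        c ∈ ball 0 γ ∧ h ∈ Set.Ioo (2 * β - κ * δ) (2 * β + κ * δ) := fun h hh => by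
      have := hNB hh
      rwa [Set.mem_preimage, ContinuousLinearEquiv.symm_apply_apply] at this
    by_cases hcb : c ∈ ball 0 γ
    swap
    · have : Prod.mk c ⁻¹' (assemble b ⁻¹' N) = ∅ :=
        Set.eq_empty_of_forall_notMem fun h hh => hcb (hsec h hh).1
      simp [this]
    have hcomm : K⁻¹ * volume (Set.Ioo (-γ) γ) * volume (Prod.mk c ⁻¹' (assemble b ⁻¹' N)) =
        K⁻¹ * volume (Prod.mk c ⁻¹' (assemble b ⁻¹' N)) * volume (Set.Ioo (-γ) γ) := by ring
    simp only
    rw [hcomm]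
    refine mul_volume_le_volume_prod (measurable_prodMk_left hm) measurableSet_Ioo fun t ht => ?_
    rw [ENNReal.inv_mul_le_iff hK0 hKtop]
    have hc0 : dist c 0 < γ := hcb
    have ht0 : |t| < γ := abs_lt.2 ht
    have hbox' : ∀ s ∈ Set.Icc (α - δ) (α + δ), (t, s) ∈ chartDomain η ∧
        c - (t, s) ∈ chartDomain η ∧ chart b (c - (t, s)) ∈ V₁ ∧ chart b (t, s) ∈ V₂ ∧
        κ < s ∧ c.2 - s < -κ := fun s hs => by
      refine hbox (y := (c, (t, s))) ?_
      have hsα : |s - α| ≤ δ := abs_sub_le_iff.2 ⟨by linarith [hs.2], by linarith [hs.1]⟩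
      refine max_lt (hc0.trans_le hγε) (max_lt ?_ ?_)
      · simpa using ht0.trans_le hγε
      · simp only [Real.dist_eq]; linarith
    have hvol := volume_inter_Ioo_le_sumHeight (t := t) (c := c) (m := α) (h₀ := 2 * β) hη hκ hδ
      (fun s hs => by
        obtain ⟨h1, h2, -, -, h3, h4⟩ := hbox' s hs
        exact ⟨h1, h2, h3.le, h4.le⟩)
      (hmid (y := (c, t)) (by
        exact max_lt (hc0.trans_le hγε') (by simpa using ht0.trans_le hγε')))
      (Prod.mk c ⁻¹' (assemble b ⁻¹' N))
    rw [Set.inter_eq_left.2 fun h hh => (hsec h hh).2] at hvol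
    refine hvol.trans (mul_le_mul_right (measure_mono ?_) _)
    rintro s ⟨hs, hsN⟩
    obtain ⟨h1, h2, h3, h4, -⟩ := hbox' s hs
    exact ⟨h1, h2, ⟨h3, h4⟩, hsN⟩

lemma ae_ae_sub_of_ae_volume {P : E3 → Prop} (h : ∀ᵐ z, P z) :
    ∀ᵐ x ∂sphMeasure, ∀ᵐ y ∂sphMeasure, P (x - y) := by
  have h1 : ∀ᵐ p ∂sphMeasure.prod sphMeasure, P (p.1 + p.2) :=
    sphMeasure_prod_add_mem_null (ae_iff.1 h)
  filter_upwards [Measure.ae_ae_of_ae_prod h1] with x hx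
  rw [← map_neg_sphMeasure] at hx
  filter_upwards [ae_of_ae_map measurable_neg.aemeasurable hx] with y hy
  rwa [sub_eq_add_neg]

/-- The measure `f dσ` on the sphere. -/
def sphDensity (f : E3 → ℝ) : Measure E3 := sphMeasure.withDensity fun x => ENNReal.ofReal (f x)

lemma aemeasurable_sphMeasure {f : E3 → ℝ} (hf : ContinuousOn f sph) :
    AEMeasurable f sphMeasure :=
  hf.aemeasurable measurable_sph

lemma isFiniteMeasure_sphDensity {f : E3 → ℝ} (hf : ContinuousOn f sph) :
    IsFiniteMeasure (sphDensity f) := by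
  have hcpt : IsCompact sph := isCompact_sphere 0 1
  obtain ⟨C, hC⟩ := hcpt.exists_bound_of_continuousOn hf
  refine isFiniteMeasure_withDensity_ofReal (HasFiniteIntegral.of_bounded (C := C) ?_)
  filter_upwards [ae_mem_sph] with x hx using hC x hx

lemma integral_sphDensity {f : E3 → ℝ} (hf : ContinuousOn f sph) (hfnn : ∀ x ∈ sph, 0 ≤ f x)
    (g : E3 → ℂ) : ∫ x, g x ∂sphDensity f = ∫ x, f x • g x ∂sphMeasure := by
  rw [sphDensity, integral_withDensity_eq_integral_toReal_smul₀
    (aemeasurable_sphMeasure hf).ennreal_ofReal (by simp)]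
  refine integral_congr_ae ?_
  filter_upwards [ae_mem_sph] with x hx
  rw [ENNReal.toReal_ofReal (hfnn x hx)]

lemma conv_sphDensity_absolutelyContinuous (f : E3 → ℝ) :
    (sphDensity f).conv (sphDensity f) ≪ volume := by
  refine Measure.AbsolutelyContinuous.mk fun N hN hN0 => ?_
  rw [Measure.conv, Measure.map_apply measurable_add hN]
  have hac : sphDensity f ≪ sphMeasure := withDensity_absolutelyContinuous _ _
  exact (hac.prod hac) (sphMeasure_prod_add_mem_null hN0)

/-- A density of `fσ * fσ` in the distributional sense is a Radon–Nikodym derivative. -/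
lemma IsConvPairDensity.ae_eq_rnDeriv {f : E3 → ℝ} (hf : ContinuousOn f sph)
    (hfnn : ∀ x ∈ sph, 0 ≤ f x) {Q : E3 → ℂ}
    (hQ : IsConvPairDensity (fun x => (f x : ℂ)) (fun x => (f x : ℂ)) Q) :
    ∀ᵐ z, Q z = (((sphDensity f).conv (sphDensity f)).rnDeriv volume z).toReal := by
  have := isFiniteMeasure_sphDensity hf
  have hac := conv_sphDensity_absolutelyContinuous f
  set ρ := (sphDensity f).conv (sphDensity f)
  have hq : Integrable (fun z => (((ρ.rnDeriv volume z).toReal : ℝ) : ℂ)) volume :=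
    Measure.integrable_toReal_rnDeriv.ofReal
  refine ae_eq_of_integral_contDiff_smul_eq hQ.1.locallyIntegrable hq.locallyIntegrable
    fun g hg hgc => ?_
  have hgC : Continuous fun z => (g z : ℂ) := Complex.continuous_ofReal.comp hg.continuous
  have hgcC : HasCompactSupport fun z => (g z : ℂ) := hgc.comp_left (g := Complex.ofReal) rfl
  have h1 := integral_rnDeriv_smul (f := fun z => (g z : ℂ)) hac
  have h2 : Integrable (fun z => (g z : ℂ)) ρ := hgC.integrable_of_hasCompactSupport hgcC
  calc ∫ z, g z • Q z = ∫ z, (g z : ℂ) * Q z := by simp only [Complex.real_smul]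
    _ = ∫ x, ∫ y, (g (x + y) : ℂ) * ((f x : ℂ) * (f y : ℂ)) ∂sphMeasure ∂sphMeasure :=
      hQ.2 _ hgC hgcC
    _ = ∫ z, (g z : ℂ) ∂ρ := by
      rw [integral_conv h2, integral_sphDensity hf hfnn]
      refine integral_congr_ae (Eventually.of_forall fun x => ?_)
      simp only
      rw [integral_sphDensity hf hfnn, ← integral_smul]
      refine integral_congr_ae (Eventually.of_forall fun y => ?_)
      simp only [Complex.real_smul]
      ring
    _ = ∫ z, g z • (((ρ.rnDeriv volume z).toReal : ℝ) : ℂ) := by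
      rw [← h1]
      simp only [Complex.real_smul, mul_comm]

lemma exists_isOpen_lt {g : E3 → ℝ} (hg : ContinuousOn g sph) {x : E3} (hx : x ∈ sph) {r : ℝ}
    (hr : r < g x) : ∃ V : Set E3, IsOpen V ∧ x ∈ V ∧ ∀ y ∈ V ∩ sph, r < g y := by
  obtain ⟨V, hV, hxV, h⟩ := mem_nhdsWithin.1 ((hg x hx).eventually (lt_mem_nhds hr))
  exact ⟨V, hV, hxV, fun y hy => h hy⟩

lemma smul_restrict_le_sphDensity {f : E3 → ℝ} {V : Set E3} (hV : IsOpen V) {r : ℝ}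
    (h : ∀ y ∈ V ∩ sph, r < f y) :
    ENNReal.ofReal r • sphMeasure.restrict V ≤ sphDensity f := by
  refine Measure.le_iff.2 fun s hs => ?_
  rw [Measure.smul_apply, smul_eq_mul, sphDensity, withDensity_apply _ hs,
    Measure.restrict_apply hs]
  calc ENNReal.ofReal r * sphMeasure (s ∩ V)
      = ∫⁻ _ in s ∩ V, ENNReal.ofReal r ∂sphMeasure := by simp
    _ ≤ ∫⁻ x in s ∩ V, ENNReal.ofReal (f x) ∂sphMeasure := by
      refine setLIntegral_mono_ae' (hs.inter hV.measurableSet) ?_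
      filter_upwards [ae_mem_sph] with x hx hxs
      exact ENNReal.ofReal_le_ofReal (h x ⟨hxs.2, hx⟩).le
    _ ≤ _ := lintegral_mono_set Set.inter_subset_left

lemma exists_le_rnDeriv_conv {f : E3 → ℝ} (hf : ContinuousOn f sph)
    {u v : E3} (hu : u ∈ sph) (hv : v ∈ sph) (huv : u ≠ v) (huv' : u ≠ -v) (hfu : 0 < f u)
    (hfv : 0 < f v) :
    ∃ c : ℝ≥0∞, c ≠ 0 ∧ ∃ B : Set E3, IsOpen B ∧ u + v ∈ B ∧
      ∀ᵐ z, z ∈ B → c ≤ ((sphDensity f).conv (sphDensity f)).rnDeriv volume z := by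
  have := isFiniteMeasure_sphDensity hf
  have hac := conv_sphDensity_absolutelyContinuous f
  obtain ⟨V₁, hV₁, huV, h₁⟩ := exists_isOpen_lt hf hu (half_lt_self hfu)
  obtain ⟨V₂, hV₂, hvV, h₂⟩ := exists_isOpen_lt hf hv (half_lt_self hfv)
  obtain ⟨k, hk, B, hB, huvB, hkB⟩ :=
    exists_mul_volume_le_sphMeasure_prod hu hv huv huv' hV₁ hV₂ huV hvV
  refine ⟨ENNReal.ofReal (f u / 2) * ENNReal.ofReal (f v / 2) * k, ?_, B, hB, huvB, ?_⟩
  · simp [hk, hfu, hfv]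
  rw [← ae_restrict_iff' hB.measurableSet]
  refine ae_le_of_forall_setLIntegral_le_of_sigmaFinite measurable_const fun s hs _ => ?_
  rw [Measure.restrict_restrict hs, Measure.setLIntegral_rnDeriv hac, setLIntegral_const,
    Measure.conv, Measure.map_apply measurable_add (hs.inter hB.measurableSet)]
  have hle := Measure.prod_mono (smul_restrict_le_sphDensity hV₁ h₁)
    (smul_restrict_le_sphDensity hV₂ h₂) ((fun p : E3 × E3 => p.1 + p.2) ⁻¹' (s ∩ B))
  refine le_trans ?_ hle
  rw [Measure.prod_smul_left, Measure.prod_smul_right, Measure.prod_restrict, Measure.smul_apply,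
    Measure.smul_apply, Measure.restrict_apply (measurable_add (hs.inter hB.measurableSet)),
    smul_eq_mul, smul_eq_mul, ← mul_assoc, mul_assoc _ k,
    Set.inter_comm _ (V₁ ×ˢ V₂)]
  exact mul_le_mul_right (hkB _ Set.inter_subset_right (hs.inter hB.measurableSet)) _

lemma exists_le_re_of_isConvPairDensity {f : E3 → ℝ} (hf : ContinuousOn f sph)
    (hfnn : ∀ x ∈ sph, 0 ≤ f x) {Q : E3 → ℂ}
    (hQ : IsConvPairDensity (fun x => (f x : ℂ)) (fun x => (f x : ℂ)) Q)
    {u v : E3} (hu : u ∈ sph) (hv : v ∈ sph) (huv : u ≠ v) (huv' : u ≠ -v) (hfu : 0 < f u)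
    (hfv : 0 < f v) :
    ∃ c : ℝ, 0 < c ∧ ∃ B : Set E3, IsOpen B ∧ u + v ∈ B ∧
      ∀ᵐ z, 0 ≤ (Q z).re ∧ (z ∈ B → c ≤ (Q z).re) := by
  have := isFiniteMeasure_sphDensity hf
  obtain ⟨c, hc, B, hB, huvB, h⟩ := exists_le_rnDeriv_conv hf hu hv huv huv' hfu hfv
  have hc1 : min c 1 ≠ ∞ := ne_top_of_le_ne_top ENNReal.one_ne_top (min_le_right _ _)
  refine ⟨(min c 1).toReal, ENNReal.toReal_pos (by simp [hc]) hc1, B, hB, huvB, ?_⟩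
  filter_upwards [h, hQ.ae_eq_rnDeriv hf hfnn,
    Measure.rnDeriv_lt_top ((sphDensity f).conv (sphDensity f)) volume] with z hz hQz hlt
  rw [hQz, Complex.ofReal_re]
  exact ⟨ENNReal.toReal_nonneg, fun hzB =>
    ENNReal.toReal_mono hlt.ne ((min_le_left _ _).trans (hz hzB))⟩

/-- If `f` does not vanish near `p` and `p` is a sum of three points where `f` is positive, then
`f` is positive at `p`. -/
lemma pos_of_eq_add_add {a f : E3 → ℝ} (ha : ContinuousOn a sph) (hapos : ∀ x ∈ sph, 0 < a x)
    (hf : ContinuousOn f sph) (hfnn : ∀ x ∈ sph, 0 ≤ f x) {Q : E3 → ℂ}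
    (hQ : IsConvPairDensity (fun x => (f x : ℂ)) (fun x => (f x : ℂ)) Q)
    (heq : ∀ x ∈ sph, (f x : ℂ) = (a x : ℂ) * ∫ y, (f y : ℂ) * Q (x - y) ∂sphMeasure)
    {p u v w : E3} (hp : p ∈ sph) (hu : u ∈ sph) (hv : v ∈ sph) (hw : w ∈ sph)
    (huv : u ≠ v) (huv' : u ≠ -v) (hfu : 0 < f u) (hfv : 0 < f v) (hfw : 0 < f w)
    (hsum : p = u + v + w)
    (hcl : ∀ O : Set E3, IsOpen O → p ∈ O → ∃ x ∈ O ∩ sph, 0 < f x) : 0 < f p := by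
  by_contra hneg
  have hfp : f p = 0 := le_antisymm (not_lt.1 hneg) (hfnn p hp)
  obtain ⟨c, hc, B, hB, huvB, hae⟩ :=
    exists_le_re_of_isConvPairDensity hf hfnn hQ hu hv huv huv' hfu hfv
  obtain ⟨P, W, hP, hpP, hW, hwW, hPW⟩ := mem_nhds_prod_iff'.1
    ((hB.preimage (continuous_sub (G := E3))).mem_nhds
      (show (p, w) ∈ _ by simpa [hsum] using huvB))
  obtain ⟨W', hW', hwW', hfW⟩ := exists_isOpen_lt hf hw (half_lt_self hfw)
  have hWW := hW.inter hW'
  have hm : 0 < sphMeasure.real (W ∩ W') :=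
    ENNReal.toReal_pos (sphMeasure_pos_of_isOpen hWW hw ⟨hwW, hwW'⟩).ne' (measure_ne_top _ _)
  set r := sphMeasure.real (W ∩ W') * (f w / 2 * c) with hr
  have hrpos : 0 < r := by positivity
  obtain ⟨O₁, hO₁, hpO₁, hlt⟩ := exists_isOpen_lt (g := fun x => a x * r - f x) (r := 0)
    ((ha.mul continuousOn_const).sub hf) hp
    (by simpa [hfp] using mul_pos (hapos p hp) hrpos)
  obtain ⟨x₁, ⟨⟨hx₁P, hx₁O⟩, hx₁⟩, hfx₁⟩ := hcl (P ∩ O₁) (hP.inter hO₁) ⟨hpP, hpO₁⟩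
  obtain ⟨O₂, hO₂, hx₁O₂, hpos⟩ := exists_isOpen_lt hf hx₁ hfx₁
  have hmeas := sphMeasure_pos_of_isOpen ((hP.inter hO₁).inter hO₂) hx₁ ⟨⟨hx₁P, hx₁O⟩, hx₁O₂⟩
  obtain ⟨x, ⟨⟨hxP, hxO₁⟩, hxO₂⟩, hx, hxae⟩ := ((frequently_ae_mem_iff.2 hmeas.ne').and_eventually
    (ae_mem_sph.and (ae_ae_sub_of_ae_volume hae))).exists
  have hfx := hpos x ⟨hxO₂, hx⟩
  have hne : ∫ y, (f y : ℂ) * Q (x - y) ∂sphMeasure ≠ 0 := fun h0 => by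
    have := heq x hx
    rw [h0, mul_zero, Complex.ofReal_eq_zero] at this
    exact hfx.ne' this
  have hint : Integrable (fun y => (f y : ℂ) * Q (x - y)) sphMeasure :=
    not_imp_comm.1 integral_undef hne
  have hre : f x = a x * ∫ y, f y * (Q (x - y)).re ∂sphMeasure := by
    have h1 := congrArg Complex.re (heq x hx)
    have h2 := integral_re hint
    simp only [RCLike.re_to_complex, Complex.re_ofReal_mul] at h2
    rw [h2]
    simpa only [Complex.ofReal_re, Complex.re_ofReal_mul] using h1
  have hint' : Integrable (fun y => f y * (Q (x - y)).re) sphMeasure := by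
    simpa only [RCLike.re_to_complex, Complex.re_ofReal_mul] using hint.re
  have hlow : r ≤ ∫ y, f y * (Q (x - y)).re ∂sphMeasure := by
    have h1 : ∫ y, (W ∩ W').indicator (fun _ => f w / 2 * c) y ∂sphMeasure = r := by
      rw [integral_indicator_const _ hWW.measurableSet, smul_eq_mul]
    rw [← h1]
    refine integral_mono_ae ((integrable_const _).indicator hWW.measurableSet) hint' ?_
    filter_upwards [ae_mem_sph, hxae] with y hy hyQ
    by_cases hyW : y ∈ W ∩ W'
    · rw [Set.indicator_of_mem hyW]
      have hyB : x - y ∈ B := hPW (Set.mk_mem_prod hxP hyW.1)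
      exact mul_le_mul (hfW y ⟨hyW.2, hy⟩).le (hyQ.2 hyB) hc.le (hfnn y hy)
    · rw [Set.indicator_of_notMem hyW]
      exact mul_nonneg (hfnn y hy) hyQ.1
  have h3 : 0 < a x * r - f x := hlt x ⟨hxO₁, hx⟩
  have h4 := mul_le_mul_of_nonneg_left hlow (hapos x hx).le
  rw [← hre] at h4
  linarith

/-- Along a great circle, one can move from `-α • b 1 + β • b 2` towards `α • b 1 + β • b 2`. -/
lemma exists_inner_lt_of_isOpen (b : OrthonormalBasis (Fin 3) ℝ E3) {α β : ℝ} (hα : 0 < α)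
    (hβ : 0 < β) (hαβ : α ^ 2 + β ^ 2 = 1) {O : Set E3} (hO : IsOpen O)
    (hp : -α • b 1 + β • b 2 ∈ O) :
    ∃ x ∈ O ∩ sph, ⟪α • b 1 + β • b 2, -α • b 1 + β • b 2⟫ < ⟪α • b 1 + β • b 2, x⟫ := by
  have hcont : Continuous fun s : ℝ => chart b (0, s) :=
    (continuous_chart b).comp (by fun_prop)
  have hh : height (0, -α) = β := by
    rw [height, ← Real.sqrt_sq hβ.le]
    congr 1
    simp only; linarith
  have hmem : chart b (0, -α) ∈ O := by simpa [chart, hh] using hp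
  have hev : ∀ᶠ s in 𝓝[>] (-α), chart b (0, s) ∈ O ∧ s < 0 :=
    ((hcont.continuousAt.eventually (hO.mem_nhds hmem)).and
      (gt_mem_nhds (by linarith))).filter_mono nhdsWithin_le_nhds
  obtain ⟨s, ⟨hsO, hs0⟩, hsα⟩ := (hev.and self_mem_nhdsWithin).exists
  have hsα' : -α < s := hsα
  have hD : ((0, s) : ℝ × ℝ) ∈ chartDomain β := by
    change β ^ 2 < 1 - (0 : ℝ) ^ 2 - s ^ 2
    nlinarith
  refine ⟨_, ⟨hsO, chart_mem_sph b hD⟩, ?_⟩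
  have hlt := lt_height hD
  simp only [inner_add_left, real_inner_smul_left, inner_chart_one, inner_chart_two]
  simp only [inner_add_right, real_inner_smul_right, b.inner_eq_ite]
  simp only [if_true, if_neg (by decide : (1 : Fin 3) ≠ 2), if_neg (by decide : (2 : Fin 3) ≠ 1)]
  nlinarith

/-- **Strict positivity.** Let `a ∈ C⁰(S²)` be strictly positive and let `f ∈ C⁰(S²)` be a
continuous, nonnegative, even solution of `f = a · (fσ*fσ*fσ)|_{S²}` (pointwise on `S²`,
with `(fσ*fσ*fσ)(x) = ∫ f(y) Q(x-y) dσ(y)` and `Q` the density of `fσ*fσ`) which does not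
vanish identically.  Then `f(x) > 0` for every `x ∈ S²`. -/
theorem even_nonneg_solution_strictly_positive
    (a : E3 → ℝ) (ha : ContinuousOn a sph) (hapos : ∀ x ∈ sph, 0 < a x)
    (f : E3 → ℝ) (hf : ContinuousOn f sph) (hfnn : ∀ x ∈ sph, 0 ≤ f x)
    (hfeven : ∀ x ∈ sph, f (-x) = f x)
    (hfne : ∃ x ∈ sph, f x ≠ 0)
    (heq : ∃ Q : E3 → ℂ, IsConvPairDensity (fun x => (f x : ℂ)) (fun x => (f x : ℂ)) Q ∧
      ∀ x ∈ sph, (f x : ℂ) = (a x : ℂ) * ∫ y, (f y : ℂ) * Q (x - y) ∂sphMeasure) :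
    ∀ x ∈ sph, 0 < f x := by
  obtain ⟨Q, hQ, hQeq⟩ := heq
  obtain ⟨x₀, hx₀, hfx₀⟩ := hfne
  by_contra! hzero
  obtain ⟨z, hz, hfz⟩ := hzero
  have hcpt : IsCompact (sph ∩ f ⁻¹' {0}) :=
    (isCompact_sphere (0 : E3) 1).of_isClosed_subset
      (hf.preimage_isClosed_of_isClosed isClosed_sph isClosed_singleton) Set.inter_subset_left
  obtain ⟨p, ⟨hp, hfp⟩, hmax⟩ := hcpt.exists_isMaxOn ⟨z, hz, le_antisymm hfz (hfnn z hz)⟩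
    (f := fun x => ⟪x₀, x⟫) (by fun_prop)
  have hposOf : ∀ x ∈ sph, ⟪x₀, p⟫ < ⟪x₀, x⟫ → 0 < f x := fun x hx hlt =>
    (hfnn x hx).lt_of_ne fun h0 => hlt.not_ge (hmax ⟨hx, h0.symm⟩)
  have hfp0 : f p = 0 := hfp
  have hpx : p ≠ x₀ := fun h => hfx₀ (h ▸ hfp0)
  have hpx' : p ≠ -x₀ := fun h => hfx₀ (by rw [← hfeven x₀ hx₀, ← h, hfp0])
  obtain ⟨b, α, β, hα, hβ, rfl, rfl⟩ := exists_basis_symmetric hp hx₀ hpx hpx'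
  have hαβ := (smul_add_smul_mem_sph b (by decide)).1 hx₀
  have hu : α • b 0 + β • b 2 ∈ sph := (smul_add_smul_mem_sph b (by decide)).2 hαβ
  have hv : -α • b 0 + β • b 2 ∈ sph :=
    (smul_add_smul_mem_sph b (by decide)).2 (by rw [neg_sq, hαβ])
  have hw : -(α • b 1 + β • b 2) ∈ sph := by rw [mem_sph, norm_neg]; exact mem_sph.1 hx₀
  have hb0 : b 0 ≠ 0 := b.orthonormal.ne_zero 0
  have hb2 : b 2 ≠ 0 := b.orthonormal.ne_zero 2
  have h10 : (1 : Fin 3) ≠ 0 := by decide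
  have h12 : (1 : Fin 3) ≠ 2 := by decide
  have h20 : (2 : Fin 3) ≠ 0 := by decide
  have h21 : (2 : Fin 3) ≠ 1 := by decide
  have hpos := pos_of_eq_add_add ha hapos hf hfnn hQ hQeq hp hu hv hw ?_ ?_ ?_ ?_ ?_ ?_ ?_
  · exact hpos.ne' hfp0
  · intro h
    have h1 : (2 * α) • b 0 = 0 := by
      rw [← sub_eq_zero.2 h]; module
    exact (smul_ne_zero (by positivity) hb0) h1
  · intro h
    have h1 : (2 * β) • b 2 = 0 := by
      rw [← eq_neg_iff_add_eq_zero.1 h]; module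
    exact (smul_ne_zero (by positivity) hb2) h1
  · refine hposOf _ hu ?_
    simp only [inner_add_left, inner_add_right, real_inner_smul_left, real_inner_smul_right,
      b.inner_eq_ite, if_true, h10, h12, h20, h21, if_false]
    nlinarith
  · refine hposOf _ hv ?_
    simp only [inner_add_left, inner_add_right, real_inner_smul_left, real_inner_smul_right,
      b.inner_eq_ite, if_true, h10, h12, h20, h21, if_false]
    nlinarith
  · rw [hfeven _ hx₀]
    exact (hfnn _ hx₀).lt_of_ne' hfx₀
  · module
  · intro O hO hpO
    obtain ⟨x, hx, hlt⟩ := exists_inner_lt_of_isOpen b hα hβ hαβ hO hpO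
    exact ⟨x, hx, hposOf x hx.2 hlt⟩

end
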